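/- Fix Δ > 0 and a finitely generated group G, and let Hom_Δ(G) be the class of all homomorphisms of G into Isom(X) over all geodesic spaces X with Δ-thin triangles. Then the image of the map L : Hom_Δ(G) → LF(G), L(ρ)(g) = t(ρg), has compact closure in LF(G) ∪ PLF(G) (with the topology in which L_n ∈ LF(G) converges to [L] ∈ PLF(G) iff there exist λ_n → 0 with λ_n L_n → L pointwise). Moreover every point of the closure that lies in PLF(G) is the projectivized length function of an action of G by isometries on an ℝ-tree with no global fixed point. -/

import Mathlib

open Set Filter Metric

section Common

variable {H : Type*} [MetricSpace H]

/-- `γ` parametrizes a geodesic from `a` to `b` by arclength on `[0, dist a b]`. -/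
def IsGeodesicSegment (γ : ℝ → H) (a b : H) : Prop :=
  γ 0 = a ∧ γ (dist a b) = b ∧
    ∀ s ∈ Set.Icc (0:ℝ) (dist a b), ∀ t ∈ Set.Icc (0:ℝ) (dist a b),
      dist (γ s) (γ t) = |s - t|

/-- A geodesic space: every pair of points is joined by a geodesic. -/
def GeodesicSpace (H : Type*) [MetricSpace H] : Prop :=
  ∀ a b : H, ∃ γ : ℝ → H, IsGeodesicSegment γ a b

/-- The image of a geodesic segment from `a` to `b`. -/
def segImage (γ : ℝ → H) (a b : H) : Set H :=
  γ '' Set.Icc 0 (dist a b)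

/-- A space has `Δ`-thin triangles if each side of every geodesic triangle is contained
in the `Δ`-neighborhood of the union of the other two sides. -/
def ThinTriangles (H : Type*) [MetricSpace H] (Δ : ℝ) : Prop :=
  ∀ a b c : H, ∀ γab γbc γca : ℝ → H,
    IsGeodesicSegment γab a b → IsGeodesicSegment γbc b c → IsGeodesicSegment γca c a →
      ∀ x ∈ segImage γab a b, ∃ y ∈ segImage γbc b c ∪ segImage γca c a, dist x y ≤ Δ

/-- An arc from `a` to `b`, parametrized (injectively and continuously) by `[0,1]`. -/
def IsArcParam (α : ℝ → H) (a b : H) : Prop :=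
  ContinuousOn α (Set.Icc 0 1) ∧ Set.InjOn α (Set.Icc 0 1) ∧ α 0 = a ∧ α 1 = b

/-- An `ℝ`-tree: a metric space in which every pair of points is joined by a geodesic
(so it is a path-metric space and arcs are isometric to intervals of `ℝ`) and in which
the arc joining two points is unique. -/
def IsRTree (X : Type*) [MetricSpace X] : Prop :=
  (∀ a b : X, ∃ γ : ℝ → X, IsGeodesicSegment γ a b) ∧
  ∀ a b : X, ∀ α β : ℝ → X, IsArcParam α a b → IsArcParam β a b →
    α '' Set.Icc 0 1 = β '' Set.Icc 0 1

/-- The translation length of an isometry. -/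
noncomputable def translationLength {X : Type*} [MetricSpace X] (τ : X ≃ᵢ X) : ℝ :=
  ⨅ x : X, dist x (τ x)

/-- The core of an isometry of an `ℝ`-tree: points moved the minimal distance. -/
def isomCore {X : Type*} [MetricSpace X] (τ : X ≃ᵢ X) : Set X :=
  {x : X | dist x (τ x) = translationLength τ}

/-- An elliptic isometry: one having a fixed point. -/
def IsElliptic {X : Type*} [MetricSpace X] (τ : X ≃ᵢ X) : Prop :=
  ∃ x, τ x = x

/-- A hyperbolic isometry of an `ℝ`-tree: positive translation length, with core
isometric to the real line (its axis). -/
def IsHyperbolicIsom {X : Type*} [MetricSpace X] (τ : X ≃ᵢ X) : Prop :=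
  0 < translationLength τ ∧
    ∃ e : ℝ → X, (∀ s t : ℝ, dist (e s) (e t) = |s - t|) ∧ Set.range e = isomCore τ

/-- A metric simplicial tree: an `ℝ`-tree together with a closed discrete set `V` of
vertices such that each connected component of the complement of `V` is an open edge:
it is the interior of a geodesic segment of positive length with endpoints in `V`. -/
def IsMetricSimplicialTree (X : Type*) [MetricSpace X] : Prop :=
  IsRTree X ∧
    ∃ V : Set X, IsClosed V ∧
      (∀ v ∈ V, ∃ ε > 0, ∀ w ∈ V, dist v w < ε → w = v) ∧
      ∀ x ∈ Vᶜ, ∃ L > (0:ℝ), ∃ f : ℝ → X,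
        (∀ s ∈ Set.Icc (0:ℝ) L, ∀ t ∈ Set.Icc (0:ℝ) L, dist (f s) (f t) = |s - t|) ∧
        f '' Set.Ioo 0 L = connectedComponentIn Vᶜ x ∧ f 0 ∈ V ∧ f L ∈ V

end Common

/-!
Hyperbolic spaces degenerate to trees: if the actions move every point further and further, then
after rescaling, with base points nearly minimising the joint displacement of a finite generating
set, the displacements of the base points subconverge to a function `N` on the group for which
`N (g⁻¹ * h)` is a `0`-hyperbolic pseudo-distance, and such a pseudo-distance spans an `ℝ`-tree.
Translation lengths survive the limit because, up to an error controlled by the hyperbolicity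
constant, the translation length of `τ` equals `max 0 (dist x (τ (τ x)) - dist x (τ x))` for every
base point `x`. The choice of base points prevents all elements from being elliptic in the limit.
If instead the joint displacement stays bounded along a subsequence, then so do all translation
lengths.
-/

section Hyperbolicity

/-- The four-point form of `δ`-hyperbolicity: of the three sums of opposite distances of a
quadruple, the two largest differ by at most `δ`. -/
def FourPointCondition (X : Type*) [PseudoMetricSpace X] (δ : ℝ) : Prop :=
  ∀ w x y z : X, dist w x + dist y z ≤ max (dist w y + dist x z) (dist w z + dist x y) + δ

/-- `m` is a midpoint of `x` and `y` up to an additive error `ε`. -/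
def IsRoughMidpoint {X : Type*} [PseudoMetricSpace X] (ε : ℝ) (x y m : X) : Prop :=
  dist m x ≤ dist x y / 2 + ε ∧ dist m y ≤ dist x y / 2 + ε

/-- Existence of midpoints up to an additive error `ε`. Together with the four-point condition
this replaces geodesics, so that for instance vertex sets of hyperbolic graphs are allowed. -/
def HasRoughMidpoints (X : Type*) [PseudoMetricSpace X] (ε : ℝ) : Prop :=
  ∀ x y : X, ∃ m, IsRoughMidpoint ε x y m

namespace IsGeodesicSegment

variable {X : Type*} [MetricSpace X] {γ : ℝ → X} {a b : X}

lemma dist_left (hγ : IsGeodesicSegment γ a b) {t : ℝ} (ht : t ∈ Icc 0 (dist a b)) :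
    dist a (γ t) = t := by
  have h := hγ.2.2 0 (left_mem_Icc.2 dist_nonneg) t ht
  rwa [hγ.1, zero_sub, abs_neg, abs_of_nonneg ht.1] at h

lemma dist_right (hγ : IsGeodesicSegment γ a b) {t : ℝ} (ht : t ∈ Icc 0 (dist a b)) :
    dist (γ t) b = dist a b - t := by
  have h := hγ.2.2 t ht _ (right_mem_Icc.2 dist_nonneg)
  rwa [hγ.2.1, abs_sub_comm, abs_of_nonneg (sub_nonneg.2 ht.2)] at h

lemma continuousOn (hγ : IsGeodesicSegment γ a b) : ContinuousOn γ (Icc 0 (dist a b)) := by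
  refine LipschitzOnWith.continuousOn (K := 1) (LipschitzOnWith.of_dist_le_mul fun s hs t ht => ?_)
  rw [hγ.2.2 s hs t ht, Real.dist_eq, NNReal.coe_one, one_mul]

lemma dist_add_dist_le (hγ : IsGeodesicSegment γ a b) {p v : X} {r : ℝ}
    (hv : v ∈ segImage γ a b) (hpv : dist p v ≤ r) : dist a p + dist p b ≤ dist a b + 2 * r := by
  obtain ⟨t, ht, rfl⟩ := hv
  have h₁ := dist_triangle_right a p (γ t)
  have h₂ := dist_triangle p (γ t) b
  rw [hγ.dist_left ht] at h₁
  rw [hγ.dist_right ht] at h₂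
  linarith

lemma shift {f : ℝ → X} {u v : ℝ} (huv : u ≤ v)
    (hf : ∀ s ∈ Icc u v, ∀ t ∈ Icc u v, dist (f s) (f t) = |s - t|) :
    IsGeodesicSegment (fun t => f (u + t)) (f u) (f v) := by
  have hd : dist (f u) (f v) = v - u := by
    rw [hf u (left_mem_Icc.2 huv) v (right_mem_Icc.2 huv), abs_sub_comm,
      abs_of_nonneg (sub_nonneg.2 huv)]
  simp only [IsGeodesicSegment, hd, add_zero, add_sub_cancel, true_and]
  intro s hs t ht
  rw [hf _ ⟨by linarith [hs.1], by linarith [hs.2]⟩ _ ⟨by linarith [ht.1], by linarith [ht.2]⟩,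
    add_sub_add_left_eq_sub]

end IsGeodesicSegment

section ThinTriangles

variable {X : Type*} [MetricSpace X] {Δ : ℝ}

lemma GeodesicSpace.hasRoughMidpoints (hgeo : GeodesicSpace X) : HasRoughMidpoints X 0 := by
  intro x y
  obtain ⟨γ, hγ⟩ := hgeo x y
  have hmem : dist x y / 2 ∈ Icc 0 (dist x y) :=
    ⟨by positivity, half_le_self dist_nonneg⟩
  refine ⟨γ (dist x y / 2), ?_, ?_⟩
  · rw [dist_comm, hγ.dist_left hmem, add_zero]
  · rw [hγ.dist_right hmem]
    linarith

/-- The points of a side close to one of the other two sides and those close to the other one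
form two closed sets covering the side, so by connectedness they meet. -/
lemma ThinTriangles.exists_center (hthin : ThinTriangles X Δ) (hgeo : GeodesicSpace X)
    {γ : ℝ → X} {a b : X} (hγ : IsGeodesicSegment γ a b) (c : X) :
    ∃ t ∈ Icc 0 (dist a b), dist a (γ t) + dist (γ t) c ≤ dist a c + 2 * Δ ∧
      dist b (γ t) + dist (γ t) c ≤ dist b c + 2 * Δ := by
  obtain ⟨γbc, hbc⟩ := hgeo b c
  obtain ⟨γca, hca⟩ := hgeo c a
  have hΔ : 0 ≤ Δ := by
    obtain ⟨v, -, hv⟩ := hthin a b c γ γbc γca hγ hbc hca (γ 0)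
      (mem_image_of_mem γ (left_mem_Icc.2 dist_nonneg))
    exact dist_nonneg.trans hv
  let A (e : X) : Set ℝ :=
    {t ∈ Icc 0 (dist a b) | dist e (γ t) + dist (γ t) c ≤ dist e c + 2 * Δ}
  have hclosed (e : X) : IsClosed (A e) := by
    have hcont := hγ.continuousOn
    have hsum : ContinuousOn (fun t => dist e (γ t) + dist (γ t) c) (Icc 0 (dist a b)) := by
      fun_prop
    exact hsum.preimage_isClosed_of_isClosed isClosed_Icc isClosed_Iic
  have hcover : Icc 0 (dist a b) ⊆ A a ∪ A b := by
    intro t ht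
    obtain ⟨v, hv, hd⟩ := hthin a b c γ γbc γca hγ hbc hca (γ t) (mem_image_of_mem γ ht)
    rcases hv with hv | hv
    · exact Or.inr ⟨ht, hbc.dist_add_dist_le hv hd⟩
    · have h := hca.dist_add_dist_le hv hd
      rw [add_comm, dist_comm _ a, dist_comm c, dist_comm c] at h
      exact Or.inl ⟨ht, h⟩
  have h0 : (0 : ℝ) ∈ Icc 0 (dist a b) := left_mem_Icc.2 dist_nonneg
  have h1 : dist a b ∈ Icc 0 (dist a b) := right_mem_Icc.2 dist_nonneg
  obtain ⟨t, ht, hta, htb⟩ := isPreconnected_closed_iff.1 isPreconnected_Icc _ _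
    (hclosed a) (hclosed b) hcover
    ⟨0, h0, h0, by rw [hγ.1, dist_self]; linarith⟩
    ⟨dist a b, h1, h1, by rw [hγ.2.1, dist_self]; linarith⟩
  exact ⟨t, ht, hta.2, htb.2⟩

lemma ThinTriangles.fourPointCondition (hthin : ThinTriangles X Δ) (hgeo : GeodesicSpace X) :
    FourPointCondition X (4 * Δ) := by
  intro w x y z
  obtain ⟨γ, hγ⟩ := hgeo w x
  obtain ⟨p, hp, hpw, hpx⟩ := hthin.exists_center hgeo hγ y
  obtain ⟨q, hq, hqw, hqx⟩ := hthin.exists_center hgeo hγ z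
  rw [hγ.dist_left hp] at hpw
  rw [hγ.dist_left hq] at hqw
  rw [dist_comm x, hγ.dist_right hp] at hpx
  rw [dist_comm x, hγ.dist_right hq] at hqx
  have hyz : dist y z ≤ dist (γ p) y + |p - q| + dist (γ q) z := by
    rw [← hγ.2.2 p hp q hq, dist_comm (γ p) y]
    exact dist_triangle4 y (γ p) (γ q) z
  rcases le_total p q with hpq | hpq
  · rw [abs_of_nonpos (sub_nonpos.2 hpq)] at hyz
    linarith [le_max_right (dist w y + dist x z) (dist w z + dist x y)]
  · rw [abs_of_nonneg (sub_nonneg.2 hpq)] at hyz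
    linarith [le_max_left (dist w y + dist x z) (dist w z + dist x y)]

end ThinTriangles

namespace IsRoughMidpoint

variable {X : Type*} [PseudoMetricSpace X] {δ ε : ℝ} {x y m : X}

lemma dist_le (hm : IsRoughMidpoint ε x y m) (hX : FourPointCondition X δ) {z : X} {r : ℝ}
    (hx : dist z x ≤ r) (hy : dist z y ≤ r) : dist z m ≤ r - dist x y / 2 + ε + δ := by
  have hmax : max (dist z x + dist m y) (dist z y + dist m x) ≤ r + (dist x y / 2 + ε) :=
    max_le (add_le_add hx hm.2) (add_le_add hy hm.1)
  linarith [hX z m x y]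

lemma map (hm : IsRoughMidpoint ε x y m) (τ : X ≃ᵢ X) :
    IsRoughMidpoint ε (τ x) (τ y) (τ m) := by
  simpa only [IsRoughMidpoint, τ.dist_eq] using hm

lemma dist_map_le (hm : IsRoughMidpoint ε x y m) (hX : FourPointCondition X δ) (τ : X ≃ᵢ X)
    {r : ℝ} (hxx : dist x (τ x) ≤ r) (hxy : dist x (τ y) ≤ r) (hyx : dist y (τ x) ≤ r)
    (hyy : dist y (τ y) ≤ r) : dist m (τ m) ≤ r - dist x y + 2 * (δ + ε) := by
  have hx := (hm.map τ).dist_le hX hxx hxy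
  have hy := (hm.map τ).dist_le hX hyx hyy
  rw [τ.dist_eq, dist_comm] at hx hy
  rw [dist_comm]
  linarith [hm.dist_le hX hx hy]

end IsRoughMidpoint

end Hyperbolicity

section TranslationLength

variable {X : Type*} [MetricSpace X] (τ : X ≃ᵢ X)

lemma translationLength_nonneg : 0 ≤ translationLength τ :=
  Real.iInf_nonneg fun _ => dist_nonneg

lemma bddBelow_range_dist_apply : BddBelow (range fun x => dist x (τ x)) :=
  ⟨0, forall_mem_range.2 fun _ => dist_nonneg⟩

lemma translationLength_le (x : X) : translationLength τ ≤ dist x (τ x) :=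
  ciInf_le (bddBelow_range_dist_apply τ) x

variable {τ} in
lemma IsElliptic.translationLength_eq_zero (hτ : IsElliptic τ) : translationLength τ = 0 := by
  obtain ⟨z, hz⟩ := hτ
  refine le_antisymm ?_ (translationLength_nonneg τ)
  simpa only [hz, dist_self] using translationLength_le τ z

variable {δ ε : ℝ}

lemma FourPointCondition.dist_sub_dist_le_translationLength (hX : FourPointCondition X δ)
    (x : X) : dist x (τ (τ x)) - dist x (τ x) - δ ≤ translationLength τ := by
  have : Nonempty X := ⟨x⟩
  refine le_ciInf fun y => ?_
  have h4 := hX x (τ (τ x)) (τ x) (τ y)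
  rw [dist_comm (τ (τ x)) (τ x)] at h4
  simp only [τ.dist_eq] at h4
  have h₁ := dist_triangle x y (τ y)
  have h₂ := dist_triangle_right (τ x) y (τ y)
  rw [τ.dist_eq] at h₂
  have hmax : max (dist x (τ x) + dist (τ x) y) (dist x (τ y) + dist x (τ x)) ≤
      dist x (τ x) + dist x y + dist y (τ y) := max_le (by linarith) (by linarith)
  linarith

lemma FourPointCondition.translationLength_le_max (hX : FourPointCondition X δ)
    (hmid : HasRoughMidpoints X ε) (x : X) :
    translationLength τ ≤ max 0 (dist x (τ (τ x)) - dist x (τ x)) + 2 * (δ + ε) := by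
  obtain ⟨m, hm⟩ := hmid x (τ x)
  have hl := le_max_left 0 (dist x (τ (τ x)) - dist x (τ x))
  have hr := le_max_right 0 (dist x (τ (τ x)) - dist x (τ x))
  have hm' := hm.dist_map_le hX τ
    (r := max 0 (dist x (τ (τ x)) - dist x (τ x)) + dist x (τ x))
    (by linarith) (by linarith) (by linarith [dist_self (τ x), dist_nonneg (x := x) (y := τ x)])
    (by rw [τ.dist_eq]; linarith)
  linarith [translationLength_le τ m]

lemma FourPointCondition.abs_translationLength_sub_le (hX : FourPointCondition X δ)
    (hmid : HasRoughMidpoints X ε) (x : X) :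
    |translationLength τ - max 0 (dist x (τ (τ x)) - dist x (τ x))| ≤ 2 * (δ + ε) := by
  have hδ : 0 ≤ δ := by simpa using hX x x x x
  have hε : 0 ≤ ε := by
    obtain ⟨m, hm, -⟩ := hmid x x
    simpa using dist_nonneg.trans hm
  have hlow : max 0 (dist x (τ (τ x)) - dist x (τ x)) ≤ translationLength τ + δ :=
    max_le (add_nonneg (translationLength_nonneg τ) hδ)
      (by linarith [hX.dist_sub_dist_le_translationLength τ x])
  rw [abs_le]
  constructor <;> linarith [hX.translationLength_le_max τ hmid x]

end TranslationLength

section ZeroHyperbolic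

/-- A `0`-hyperbolic space: a pseudo-metric space isometric to a subset of an `ℝ`-tree, up to
points at distance zero. -/
class ZeroHyperbolicSpace (Y : Type*) [PseudoMetricSpace Y] : Prop where
  fourPointCondition : FourPointCondition Y 0

lemma ZeroHyperbolicSpace.dist_add_dist_le_max {Y : Type*} [PseudoMetricSpace Y]
    [ZeroHyperbolicSpace Y] (w x y z : Y) :
    dist w x + dist y z ≤ max (dist w y + dist x z) (dist w z + dist x y) := by
  simpa only [add_zero] using ZeroHyperbolicSpace.fourPointCondition w x y z

instance {Y : Type*} [PseudoMetricSpace Y] [ZeroHyperbolicSpace Y] :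
    ZeroHyperbolicSpace (SeparationQuotient Y) where
  fourPointCondition := by
    intro w x y z
    obtain ⟨w, rfl⟩ := SeparationQuotient.surjective_mk w
    obtain ⟨x, rfl⟩ := SeparationQuotient.surjective_mk x
    obtain ⟨y, rfl⟩ := SeparationQuotient.surjective_mk y
    obtain ⟨z, rfl⟩ := SeparationQuotient.surjective_mk z
    simpa only [SeparationQuotient.dist_mk] using ZeroHyperbolicSpace.fourPointCondition w x y z

open ZeroHyperbolicSpace

/-- The points lying between `a` and `b`. -/
def metricSegment {T : Type*} [PseudoMetricSpace T] (a b : T) : Set T :=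
  {p | dist a p + dist p b = dist a b}

variable {T : Type*} [MetricSpace T] [ZeroHyperbolicSpace T] {a b p : T}

/-- For `q ≠ p`, the condition `dist x q < dist x p + dist p q` says that `x` and `q` lie in the
same branch at `p`. By `0`-hyperbolicity this is an equivalence relation, with open classes, on
the complement of `p`. -/
lemma mem_of_isPreconnected_of_mem_metricSegment (hp : p ∈ metricSegment a b) {s : Set T}
    (hs : IsPreconnected s) (ha : a ∈ s) (hb : b ∈ s) : p ∈ s := by
  by_contra hps
  refine (show dist a p + dist p b = dist a b from hp).not_gt ?_
  refine hs.induction₂ (fun x y => dist x y < dist x p + dist p y) ?_ ?_ ?_ ha hb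
  · intro x hx
    have hpos : 0 < dist x p := dist_pos.2 (ne_of_mem_of_not_mem hx hps)
    filter_upwards [mem_nhdsWithin_of_mem_nhds (ball_mem_nhds x hpos)] with y hy
    rw [mem_ball'] at hy
    exact hy.trans_le (le_add_of_nonneg_right dist_nonneg)
  · intro x y z _ _ _ hxy hyz
    have h4 := dist_add_dist_le_max x z y p
    rw [dist_comm z p, dist_comm z y, dist_comm y p] at h4
    rw [dist_comm y p] at hyz
    rcases le_max_iff.1 h4 with h | h <;> linarith
  · intro x y _ _ hxy
    rwa [dist_comm y x, dist_comm y p, dist_comm p x, add_comm]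

lemma GeodesicSpace.exists_median (hT : GeodesicSpace T) (a b q : T) :
    ∃ c, c ∈ metricSegment a b ∧ c ∈ metricSegment a q ∧ c ∈ metricSegment q b := by
  obtain ⟨γ, hγ⟩ := hT a b
  obtain ⟨t, ht⟩ : ∃ t, t = (dist a b + dist a q - dist q b) / 2 := ⟨_, rfl⟩
  have hmem : t ∈ Icc 0 (dist a b) :=
    ⟨by linarith [dist_triangle_left q b a], by linarith [dist_triangle_right a q b]⟩
  have hac := hγ.dist_left hmem
  have hcb := hγ.dist_right hmem
  have hqc : dist q (γ t) ≤ (dist a q + dist q b - dist a b) / 2 := by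
    have h4 := dist_add_dist_le_max q (γ t) a b
    rw [dist_comm q a, dist_comm (γ t) a] at h4
    rcases le_max_iff.1 h4 with h | h <;> linarith
  refine ⟨γ t, ?_, ?_, ?_⟩ <;> rw [metricSegment, mem_ofPred_eq]
  · linarith
  · linarith [dist_triangle a (γ t) q, dist_comm (γ t) q]
  · linarith [dist_triangle q (γ t) b]

lemma mem_image_Icc_of_mem_metricSegment {α : ℝ → T} {u v : ℝ} (huv : u ≤ v)
    (hα : ContinuousOn α (Icc u v)) (hp : p ∈ metricSegment (α u) (α v)) : p ∈ α '' Icc u v :=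
  mem_of_isPreconnected_of_mem_metricSegment hp (isPreconnected_Icc.image α hα)
    (mem_image_of_mem α (left_mem_Icc.2 huv)) (mem_image_of_mem α (right_mem_Icc.2 huv))

/-- The median of `a`, `b` and a point `q` of the arc is visited both before and after `q`. -/
lemma IsArcParam.image_eq_metricSegment {α : ℝ → T} (hα : IsArcParam α a b)
    (hT : GeodesicSpace T) : α '' Icc 0 1 = metricSegment a b := by
  obtain ⟨hcont, hinj, rfl, rfl⟩ := hα
  refine Subset.antisymm ?_ fun p hp => mem_image_Icc_of_mem_metricSegment zero_le_one hcont hp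
  rintro _ ⟨s, hs, rfl⟩
  obtain ⟨c, hc, hc₁, hc₂⟩ := hT.exists_median (α 0) (α 1) (α s)
  obtain ⟨u, hu, rfl⟩ := mem_image_Icc_of_mem_metricSegment hs.1
    (hcont.mono (Icc_subset_Icc_right hs.2)) hc₁
  obtain ⟨v, hv, hvu⟩ := mem_image_Icc_of_mem_metricSegment hs.2
    (hcont.mono (Icc_subset_Icc_left hs.1)) hc₂
  have huv : v = u := hinj ⟨hs.1.trans hv.1, hv.2⟩ ⟨hu.1, hu.2.trans hs.2⟩ hvu
  have hus : u = s := le_antisymm hu.2 (huv ▸ hv.1)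
  rwa [← hus]

lemma GeodesicSpace.isRTree (hT : GeodesicSpace T) : IsRTree T :=
  ⟨hT, fun _ _ _ _ hα hβ =>
    (hα.image_eq_metricSegment hT).trans (hβ.image_eq_metricSegment hT).symm⟩

end ZeroHyperbolic

section SpanningTree

/-- A point of the tree spanned by a `0`-hyperbolic space, recorded by two points of the space
between which it lies and its distances to them. Every point has many such names. -/
@[ext]
structure SegmentPoint (Y : Type*) [PseudoMetricSpace Y] where
  endpoint : Bool → Y
  offset : Bool → ℝ
  offset_nonneg : ∀ i, 0 ≤ offset i
  offset_add : offset false + offset true = dist (endpoint false) (endpoint true)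

namespace SegmentPoint

section Dist

variable {Y : Type*} [PseudoMetricSpace Y]

/-- In a tree, the geodesic from `p` to `q` extends to a geodesic from an endpoint of the segment
of `p` to an endpoint of the segment of `q`, so one of the four lower bounds is attained. -/
noncomputable instance : Dist (SegmentPoint Y) where
  dist p q :=
    ⨆ i : Bool × Bool, dist (p.endpoint i.1) (q.endpoint i.2) - p.offset i.1 - q.offset i.2

lemma le_dist (p q : SegmentPoint Y) (i j : Bool) :
    dist (p.endpoint i) (q.endpoint j) - p.offset i - q.offset j ≤ dist p q :=
  le_ciSup (f := fun i : Bool × Bool =>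
    dist (p.endpoint i.1) (q.endpoint i.2) - p.offset i.1 - q.offset i.2)
    (finite_range _).bddAbove (i, j)

lemma dist_le {p q : SegmentPoint Y} {r : ℝ}
    (h : ∀ i j, dist (p.endpoint i) (q.endpoint j) - p.offset i - q.offset j ≤ r) :
    dist p q ≤ r :=
  ciSup_le fun i => h i.1 i.2

lemma exists_dist_eq (p q : SegmentPoint Y) :
    ∃ i j, dist (p.endpoint i) (q.endpoint j) - p.offset i - q.offset j = dist p q := by
  obtain ⟨⟨i, j⟩, h⟩ := exists_eq_ciSup_of_finite (f := fun i : Bool × Bool =>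
    dist (p.endpoint i.1) (q.endpoint i.2) - p.offset i.1 - q.offset i.2)
  exact ⟨i, j, h⟩

lemma dist_endpoint_le (p : SegmentPoint Y) (i j : Bool) :
    dist (p.endpoint i) (p.endpoint j) ≤ p.offset i + p.offset j := by
  have h := p.offset_add
  have h₀ := p.offset_nonneg i
  cases i <;> cases j
  · simpa only [dist_self] using add_nonneg h₀ h₀
  · exact h.ge
  · rw [dist_comm, add_comm]
    exact h.ge
  · simpa only [dist_self] using add_nonneg h₀ h₀

protected lemma dist_self (p : SegmentPoint Y) : dist p p = 0 := by
  refine le_antisymm (dist_le fun i j => ?_) ?_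
  · linarith [p.dist_endpoint_le i j]
  · linarith [le_dist p p false true, p.offset_add]

protected lemma dist_comm (p q : SegmentPoint Y) : dist p q = dist q p := by
  have hle (p q : SegmentPoint Y) : dist p q ≤ dist q p := dist_le fun i j => by
    rw [dist_comm, sub_right_comm]
    exact le_dist q p j i
  exact le_antisymm (hle p q) (hle q p)

/-- The copy of the given space inside the tree it spans. -/
def vertex (y : Y) : SegmentPoint Y where
  endpoint _ := y
  offset _ := 0
  offset_nonneg _ := le_rfl
  offset_add := by rw [add_zero, dist_self]

lemma dist_vertex (y z : Y) : dist (vertex y) (vertex z) = dist y z := by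
  obtain ⟨i, j, h⟩ := exists_dist_eq (vertex y) (vertex z)
  simpa only [vertex, sub_zero] using h.symm

/-- The point at distance `s` from `a` on the segment from `a` to `b`. -/
def ofIcc {a b : Y} (s : Icc 0 (dist a b)) : SegmentPoint Y where
  endpoint i := bif i then b else a
  offset i := bif i then dist a b - s else s
  offset_nonneg
    | false => s.2.1
    | true => sub_nonneg.2 s.2.2
  offset_add := add_sub_cancel _ _

lemma dist_ofIcc {a b : Y} (s t : Icc 0 (dist a b)) :
    dist (ofIcc s) (ofIcc t) = |(s : ℝ) - t| := by
  refine le_antisymm (dist_le ?_) (abs_sub_le_iff.2 ⟨?_, ?_⟩)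
  · rintro (_ | _) (_ | _) <;> simp only [ofIcc, cond_true, cond_false, dist_self, dist_comm b a]
    · linarith [abs_nonneg ((s : ℝ) - t), s.2.1, t.2.1]
    · linarith [neg_le_abs ((s : ℝ) - t)]
    · linarith [le_abs_self ((s : ℝ) - t)]
    · linarith [abs_nonneg ((s : ℝ) - t), s.2.2, t.2.2]
  · have h := le_dist (ofIcc s) (ofIcc t) true false
    simp only [ofIcc, cond_true, cond_false, dist_comm b a] at h ⊢
    linarith
  · have h := le_dist (ofIcc s) (ofIcc t) false true
    simp only [ofIcc, cond_true, cond_false] at h ⊢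
    linarith

end Dist

section PseudoMetric

variable {Y : Type*} [PseudoMetricSpace Y] [ZeroHyperbolicSpace Y]

lemma dist_add_dist_le_max (p q r s : SegmentPoint Y) :
    dist p q + dist r s ≤ max (dist p r + dist q s) (dist p s + dist q r) := by
  obtain ⟨i, j, hpq⟩ := exists_dist_eq p q
  obtain ⟨k, l, hrs⟩ := exists_dist_eq r s
  rcases le_max_iff.1 (ZeroHyperbolicSpace.dist_add_dist_le_max
    (p.endpoint i) (q.endpoint j) (r.endpoint k) (s.endpoint l)) with h | h
  · exact le_max_of_le_left (by linarith [le_dist p r i k, le_dist q s j l])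
  · exact le_max_of_le_right (by linarith [le_dist p s i l, le_dist q r j k])

noncomputable instance : PseudoMetricSpace (SegmentPoint Y) where
  dist_self := SegmentPoint.dist_self
  dist_comm := SegmentPoint.dist_comm
  dist_triangle p q r := by
    simpa only [SegmentPoint.dist_self, add_zero, max_self, SegmentPoint.dist_comm r q]
      using dist_add_dist_le_max p r q q

instance : ZeroHyperbolicSpace (SegmentPoint Y) where
  fourPointCondition p q r s := by
    simpa only [add_zero] using dist_add_dist_le_max p q r s

lemma exists_inseparable_ofIcc (p q : SegmentPoint Y) :
    ∃ (a b : Y) (s t : Icc 0 (dist a b)),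
      s ≤ t ∧ Inseparable p (ofIcc s) ∧ Inseparable q (ofIcc t) := by
  obtain ⟨i, j, hij⟩ := exists_dist_eq p q
  have hpq : 0 ≤ dist p q := dist_nonneg
  have hp := p.offset_nonneg i
  have hq := q.offset_nonneg j
  refine ⟨p.endpoint i, q.endpoint j, ⟨p.offset i, hp, by linarith⟩,
    ⟨p.offset i + dist p q, by linarith, by linarith⟩, Subtype.mk_le_mk.2 (by linarith), ?_, ?_⟩
  · refine Metric.inseparable_iff.2 (le_antisymm (dist_le fun k l => ?_) dist_nonneg)
    cases l <;> simp only [ofIcc, cond_true, cond_false]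
    · linarith [p.dist_endpoint_le k i]
    · linarith [le_dist p q k j]
  · refine Metric.inseparable_iff.2 (le_antisymm (dist_le fun k l => ?_) dist_nonneg)
    cases l <;> simp only [ofIcc, cond_true, cond_false]
    · rw [dist_comm]
      linarith [le_dist p q i k]
    · linarith [q.dist_endpoint_le k j]

end PseudoMetric

section Action

variable {G Y : Type*} [Monoid G] [PseudoMetricSpace Y] [MulAction G Y] [IsIsometricSMul G Y]

instance : MulAction G (SegmentPoint Y) where
  smul g p :=
    { endpoint i := g • p.endpoint i
      offset := p.offset
      offset_nonneg := p.offset_nonneg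
      offset_add := by rw [dist_smul, p.offset_add] }
  one_smul p := SegmentPoint.ext (funext fun i => one_smul G (p.endpoint i)) rfl
  mul_smul g h p := SegmentPoint.ext (funext fun i => mul_smul g h (p.endpoint i)) rfl

lemma smul_vertex (g : G) (y : Y) : g • vertex y = vertex (g • y) := rfl

instance [ZeroHyperbolicSpace Y] : IsIsometricSMul G (SegmentPoint Y) where
  isometry_smul g := Isometry.of_dist_eq fun p q => iSup_congr fun i =>
    congrArg (· - p.offset i.1 - q.offset i.2) (dist_smul g (p.endpoint i.1) (q.endpoint i.2))

end Action

end SegmentPoint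

instance {G Y : Type*} [SMul G Y] [PseudoMetricSpace Y] [IsIsometricSMul G Y] :
    IsIsometricSMul G (SeparationQuotient Y) where
  isometry_smul g := Isometry.of_dist_eq fun p q => by
    obtain ⟨p, rfl⟩ := SeparationQuotient.surjective_mk p
    obtain ⟨q, rfl⟩ := SeparationQuotient.surjective_mk q
    simp only [← SeparationQuotient.mk_smul, SeparationQuotient.dist_mk, dist_smul]

/-- The smallest tree in which a `0`-hyperbolic space embeds, up to points at distance zero. -/
abbrev SpanningTree (Y : Type*) [PseudoMetricSpace Y] [ZeroHyperbolicSpace Y] : Type _ :=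
  SeparationQuotient (SegmentPoint Y)

lemma geodesicSpace_spanningTree (Y : Type*) [PseudoMetricSpace Y] [ZeroHyperbolicSpace Y] :
    GeodesicSpace (SpanningTree Y) := by
  intro x y
  obtain ⟨p, rfl⟩ := SeparationQuotient.surjective_mk x
  obtain ⟨q, rfl⟩ := SeparationQuotient.surjective_mk y
  obtain ⟨a, b, s, t, hst, hp, hq⟩ := SegmentPoint.exists_inseparable_ofIcc p q
  let f : ℝ → SpanningTree Y :=
    IccExtend dist_nonneg fun u : Icc 0 (dist a b) => SeparationQuotient.mk (SegmentPoint.ofIcc u)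
  have hf (u : Icc 0 (dist a b)) : f u = SeparationQuotient.mk (SegmentPoint.ofIcc u) :=
    IccExtend_val _ _ u
  have hdist : ∀ u ∈ Icc (s : ℝ) t, ∀ v ∈ Icc (s : ℝ) t, dist (f u) (f v) = |u - v| := by
    intro u hu v hv
    have hsub := Icc_subset_Icc s.2.1 t.2.2
    rw [hf ⟨u, hsub hu⟩, hf ⟨v, hsub hv⟩, SeparationQuotient.dist_mk, SegmentPoint.dist_ofIcc]
  rw [SeparationQuotient.mk_eq_mk.2 hp, SeparationQuotient.mk_eq_mk.2 hq, ← hf s, ← hf t]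
  exact ⟨_, IsGeodesicSegment.shift hst hdist⟩

end SpanningTree

/-- The homomorphism to the isometry group given by an isometric action. -/
def isometricActionHom (G X : Type*) [Group G] [PseudoEMetricSpace X] [MulAction G X]
    [IsIsometricSMul G X] : G →* (X ≃ᵢ X) where
  toFun := IsometryEquiv.constSMul
  map_one' := IsometryEquiv.ext fun x => one_smul G x
  map_mul' g h := IsometryEquiv.ext fun x => mul_smul g h x

section Displacement

variable {G X : Type*} [Group G]

section PseudoMetric

variable [PseudoMetricSpace X]

/-- How far each group element moves the base point `x`. -/
def displacement (ρ : G →* (X ≃ᵢ X)) (x : X) : GroupSeminorm G where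
  toFun g := dist x (ρ g x)
  map_one' := by rw [map_one, IsometryEquiv.coe_one, id, dist_self]
  mul_le' g h := by
    rw [map_mul, IsometryEquiv.mul_apply, ← (ρ g).dist_eq x (ρ h x)]
    exact dist_triangle _ _ _
  inv' g := by
    rw [← (ρ g).dist_eq, map_inv, IsometryEquiv.apply_inv_self, dist_comm]

lemma displacement_apply (ρ : G →* (X ≃ᵢ X)) (x : X) (g : G) :
    displacement ρ x g = dist x (ρ g x) := rfl

lemma displacement_inv_mul (ρ : G →* (X ≃ᵢ X)) (x : X) (g h : G) :
    displacement ρ x (g⁻¹ * h) = dist (ρ g x) (ρ h x) := by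
  rw [displacement_apply, ← (ρ g).dist_eq, map_mul, IsometryEquiv.mul_apply, map_inv,
    IsometryEquiv.apply_inv_self]

/-- Moving the base point to the middle of `x` and `ρ g x` lowers all displacements by that of
`g`, relative to the largest one involved. -/
lemma IsRoughMidpoint.displacement_le {δ ε : ℝ} {ρ : G →* (X ≃ᵢ X)} {x m : X} {g : G}
    (hm : IsRoughMidpoint ε x (ρ g x) m) (hX : FourPointCondition X δ) (h : G) :
    displacement ρ m h ≤
      max (max (displacement ρ x h) (displacement ρ x (h * g)))
        (max (displacement ρ x (g⁻¹ * h)) (displacement ρ x (g⁻¹ * (h * g)))) -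
      displacement ρ x g + 2 * (δ + ε) := by
  refine hm.dist_map_le hX (ρ h) ?_ ?_ ?_ ?_
  · exact (le_max_left _ _).trans (le_max_left _ _)
  · rw [← IsometryEquiv.mul_apply, ← map_mul]
    exact (le_max_right _ _).trans (le_max_left _ _)
  · rw [← displacement_inv_mul]
    exact (le_max_left _ _).trans (le_max_right _ _)
  · rw [← IsometryEquiv.mul_apply, ← map_mul, ← displacement_inv_mul]
    exact (le_max_right _ _).trans (le_max_right _ _)

end PseudoMetric

lemma abs_translationLength_sub_displacement_le [MetricSpace X] {δ ε : ℝ}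
    (hX : FourPointCondition X δ) (hmid : HasRoughMidpoints X ε) (ρ : G →* (X ≃ᵢ X)) (x : X)
    (g : G) :
    |translationLength (ρ g) - max 0 (displacement ρ x (g * g) - displacement ρ x g)| ≤
      2 * (δ + ε) := by
  rw [displacement_apply, map_mul]
  exact hX.abs_translationLength_sub_le (ρ g) hmid x

end Displacement

section HyperbolicLength

/-- Functions on a group behaving like the displacement of a base point of a hyperbolic space.
For `δ = 0` these are the Lyndon length functions of Chiswell. -/
structure IsHyperbolicLength {G : Type*} [Group G] (N : G → ℝ) (δ : ℝ) : Prop where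
  one : N 1 = 0
  inv (g : G) : N g⁻¹ = N g
  four_point (w x y z : G) : N (w⁻¹ * x) + N (y⁻¹ * z) ≤
    max (N (w⁻¹ * y) + N (x⁻¹ * z)) (N (w⁻¹ * z) + N (x⁻¹ * y)) + δ

variable {G : Type*} [Group G]

lemma isHyperbolicLength_displacement {X : Type*} [PseudoMetricSpace X] {δ : ℝ}
    (hX : FourPointCondition X δ) (ρ : G →* (X ≃ᵢ X)) (x : X) :
    IsHyperbolicLength (displacement ρ x) δ where
  one := map_one_eq_zero _
  inv := map_inv_eq_map _
  four_point w y z v := by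
    simp only [displacement_inv_mul]
    exact hX _ _ _ _

namespace IsHyperbolicLength

lemma const_mul {N : G → ℝ} {δ : ℝ} (hN : IsHyperbolicLength N δ) {c : ℝ} (hc : 0 ≤ c) :
    IsHyperbolicLength (fun g => c * N g) (c * δ) where
  one := by rw [hN.one, mul_zero]
  inv g := by rw [hN.inv]
  four_point w x y z := by
    simp only [← mul_add, ← mul_max_of_nonneg _ _ hc]
    exact mul_le_mul_of_nonneg_left (hN.four_point w x y z) hc

lemma of_tendsto {ι : Type*} {l : Filter ι} [l.NeBot] {N : ι → G → ℝ} {δ : ι → ℝ}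
    {N' : G → ℝ} {δ' : ℝ} (hN : ∀ i, IsHyperbolicLength (N i) (δ i))
    (hN' : ∀ g, Tendsto (fun i => N i g) l (nhds (N' g))) (hδ' : Tendsto δ l (nhds δ')) :
    IsHyperbolicLength N' δ' where
  one := tendsto_nhds_unique (hN' 1) (by simp only [(hN _).one, tendsto_const_nhds])
  inv g := tendsto_nhds_unique (hN' g⁻¹) (by simpa only [(hN _).inv] using hN' g)
  four_point w x y z := le_of_tendsto_of_tendsto' ((hN' _).add (hN' _))
    ((((hN' _).add (hN' _)).max ((hN' _).add (hN' _))).add hδ')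
    fun i => (hN i).four_point w x y z

variable {N : G → ℝ}

lemma mul_le_max_inv_mul (hN : IsHyperbolicLength N 0) {a : G} (ha : N (a * a) ≤ N a) (b : G) :
    N (a * b) ≤ max (N b) (N (b⁻¹ * a)) := by
  have h := hN.four_point a⁻¹ b 1 a
  simp only [inv_inv, mul_one, inv_one, one_mul, hN.inv, add_zero] at h
  refine le_max_iff.2 ((le_max_iff.1 h).symm.imp ?_ ?_) <;> intro h <;> linarith

lemma mul_le_max_mul_swap (hN : IsHyperbolicLength N 0) {a b : G} (ha : N (a * a) ≤ N a)
    (hb : N (b * b) ≤ N b) : N (a * b) ≤ max (max (N a) (N b)) (N (b * a)) := by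
  have hb' : N (b⁻¹ * b⁻¹) ≤ N b⁻¹ := by rwa [← mul_inv_rev, hN.inv, hN.inv]
  have h := hN.mul_le_max_inv_mul hb' a
  rw [← mul_inv_rev, hN.inv] at h
  refine (hN.mul_le_max_inv_mul ha b).trans (max_le ?_ (h.trans ?_))
  · exact (le_max_right _ _).trans (le_max_left _ _)
  · exact max_le_max_right _ (le_max_left _ _)

lemma mul_mul_self_le_max (hN : IsHyperbolicLength N 0) {a b : G}
    (hab : N (a * b * (a * b)) ≤ N (a * b)) : N (a * b * a) ≤ max (N a) (N b) := by
  have h := hN.four_point (a * b)⁻¹ a 1 (a * b)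
  simp only [inv_inv, mul_one, inv_one, one_mul, hN.inv, inv_mul_cancel_left, add_zero] at h
  refine le_max_iff.2 ((le_max_iff.1 h).symm.imp ?_ ?_) <;> intro h <;> linarith

/-- The analogue of Serre's lemma that a group generated by finitely many elliptic isometries of
a tree whose pairwise products are elliptic has a fixed point. -/
lemma mul_le_max (hN : IsHyperbolicLength N 0) (hell : ∀ g, N (g * g) ≤ N g) (a b : G) :
    N (a * b) ≤ max (N a) (N b) := by
  by_contra! hlt
  have hswap : N (a * b) ≤ N (b * a) :=
    (le_max_iff.1 (hN.mul_le_max_mul_swap (hell a) (hell b))).resolve_left hlt.not_ge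
  have haba := hN.mul_mul_self_le_max (hell (a * b))
  have h := hN.four_point b⁻¹ a 1 (a * b)⁻¹
  have hcancel : b * (a * b)⁻¹ = a⁻¹ := by rw [mul_inv_rev, mul_inv_cancel_left]
  rw [inv_inv, hcancel, ← mul_inv_rev (a * b) a] at h
  simp only [mul_one, inv_one, one_mul, hN.inv, add_zero] at h
  have ha := le_max_left (N a) (N b)
  have hb := le_max_right (N a) (N b)
  rcases le_max_iff.1 h with h | h <;> linarith

end IsHyperbolicLength

lemma exists_forall_le_of_mul_le_max {α : Type*} [LinearOrder α] {N : G → α} {S : Finset G}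
    (hS : Subgroup.closure (S : Set G) = ⊤) (hinv : ∀ g, N g⁻¹ = N g)
    (hmul : ∀ g h, N (g * h) ≤ max (N g) (N h)) : ∃ g₀, ∀ g, N g ≤ N g₀ := by
  classical
  obtain ⟨g₀, -, hg₀⟩ := (insert 1 S).exists_max_image N (Finset.insert_nonempty 1 S)
  refine ⟨g₀, fun g => ?_⟩
  have hg : g ∈ Subgroup.closure (S : Set G) := hS ▸ Subgroup.mem_top g
  induction hg using Subgroup.closure_induction with
  | mem s hs => exact hg₀ s (Finset.mem_insert_of_mem hs)
  | one => exact hg₀ 1 (Finset.mem_insert_self 1 S)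
  | mul g h _ _ hg hh => exact (hmul g h).trans (max_le hg hh)
  | inv g _ hg => rwa [hinv]

end HyperbolicLength

section RTreeLengthFunction

lemma translationLength_isometricActionHom_spanningTree {G Y : Type*} [Group G]
    [PseudoMetricSpace Y] [ZeroHyperbolicSpace Y] [MulAction G Y] [IsIsometricSMul G Y] (y : Y)
    (g : G) : translationLength (isometricActionHom G (SpanningTree Y) g) =
      max 0 (dist y ((g * g) • y) - dist y (g • y)) := by
  let v (z : Y) : SpanningTree Y := SeparationQuotient.mk (SegmentPoint.vertex z)
  have hv (h : G) : displacement (isometricActionHom G (SpanningTree Y)) (v y) h =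
      dist y (h • y) :=
    calc dist (v y) (h • v y) = dist (v y) (v (h • y)) := by
          rw [← SeparationQuotient.mk_smul, SegmentPoint.smul_vertex]
      _ = dist y (h • y) := by rw [SeparationQuotient.dist_mk, SegmentPoint.dist_vertex]
  have h := abs_translationLength_sub_displacement_le
    (ZeroHyperbolicSpace.fourPointCondition (Y := SpanningTree Y))
    (geodesicSpace_spanningTree Y).hasRoughMidpoints (isometricActionHom G (SpanningTree Y)) (v y) g
  rw [hv, hv, add_zero, mul_zero, abs_nonpos_iff, sub_eq_zero] at h
  exact h

universe u

/-- A point of `PLF(G)`, represented by the function `L`, coming from an isometric action on an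
`ℝ`-tree without global fixed points. -/
def IsRTreeLengthFunction {G : Type u} [Group G] (L : G → ℝ) : Prop :=
  ∃ (Γ : Type u) (_ : MetricSpace Γ), IsRTree Γ ∧ ∃ σ : G →* (Γ ≃ᵢ Γ),
    (¬∃ z, ∀ g, σ g z = z) ∧ (∃ g, translationLength (σ g) ≠ 0) ∧
      ∀ g, translationLength (σ g) = L g

namespace IsHyperbolicLength

variable {G : Type u} [Group G] {N : G → ℝ}

/-- The left-invariant pseudo-distance for which `N` is the distance to `1`. -/
abbrev pseudoMetricSpace (hN : IsHyperbolicLength N 0) : PseudoMetricSpace G where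
  dist g h := N (g⁻¹ * h)
  dist_self g := by rw [inv_mul_cancel, hN.one]
  dist_comm g h := by rw [← hN.inv, mul_inv_rev, inv_inv]
  dist_triangle g h k := by
    have h4 := hN.four_point g k h h
    rwa [inv_mul_cancel, hN.one, add_zero, add_zero, max_self, ← hN.inv (k⁻¹ * h), mul_inv_rev,
      inv_inv] at h4

lemma isRTreeLengthFunction (hN : IsHyperbolicLength N 0) {g : G} (hg : N g < N (g * g)) :
    IsRTreeLengthFunction fun h => max 0 (N (h * h) - N h) := by
  let _ := hN.pseudoMetricSpace
  have : ZeroHyperbolicSpace G := ⟨hN.four_point⟩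
  have : IsIsometricSMul G G := ⟨fun k => Isometry.of_dist_eq fun g h =>
    congrArg N (by rw [smul_eq_mul, smul_eq_mul, mul_inv_rev, mul_assoc, inv_mul_cancel_left])⟩
  have hdist (h : G) : dist 1 h = N h := congrArg N (by rw [inv_one, one_mul])
  have hlen (h : G) : translationLength (isometricActionHom G (SpanningTree G) h) =
      max 0 (N (h * h) - N h) := by
    simp only [translationLength_isometricActionHom_spanningTree (1 : G), smul_eq_mul, mul_one,
      hdist]
  have hpos : translationLength (isometricActionHom G (SpanningTree G) g) ≠ 0 := by
    rw [hlen]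
    exact (lt_max_of_lt_right (sub_pos.2 hg)).ne'
  refine ⟨SpanningTree G, inferInstance, (geodesicSpace_spanningTree G).isRTree,
    isometricActionHom G (SpanningTree G), ?_, ⟨g, hpos⟩, hlen⟩
  rintro ⟨z, hz⟩
  exact hpos (IsElliptic.translationLength_eq_zero ⟨z, hz g⟩)

end IsHyperbolicLength

end RTreeLengthFunction

section RescaledLimit

universe u

variable {G : Type u} [Group G] {ι : Type*} {l : Filter ι} {X : ι → Type*}
  [∀ i, MetricSpace (X i)] {ρ : ∀ i, G →* (X i ≃ᵢ X i)} {δ ε : ℝ} {lam : ι → ℝ} {x : ∀ i, X i}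
  {N : G → ℝ} {S : Finset G}

lemma isHyperbolicLength_of_tendsto_displacement [l.NeBot]
    (hX : ∀ i, FourPointCondition (X i) δ) (hlam₀ : ∀ i, 0 ≤ lam i) (hlam : Tendsto lam l (nhds 0))
    (hN : ∀ g, Tendsto (fun i => lam i * displacement (ρ i) (x i) g) l (nhds (N g))) :
    IsHyperbolicLength N 0 :=
  .of_tendsto (fun i => (isHyperbolicLength_displacement (hX i) (ρ i) (x i)).const_mul (hlam₀ i))
    hN (by simpa only [zero_mul] using hlam.mul_const δ)

lemma tendsto_mul_translationLength (hX : ∀ i, FourPointCondition (X i) δ)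
    (hmid : ∀ i, HasRoughMidpoints (X i) ε) (hlam₀ : ∀ i, 0 ≤ lam i) (hlam : Tendsto lam l (nhds 0))
    (hN : ∀ g, Tendsto (fun i => lam i * displacement (ρ i) (x i) g) l (nhds (N g)))
    (g : G) :
    Tendsto (fun i => lam i * translationLength (ρ i g)) l (nhds (max 0 (N (g * g) - N g))) := by
  have hlim : Tendsto (fun i => lam i *
      max 0 (displacement (ρ i) (x i) (g * g) - displacement (ρ i) (x i) g)) l
      (nhds (max 0 (N (g * g) - N g))) := by
    simpa only [mul_max_of_nonneg _ _ (hlam₀ _), mul_zero, mul_sub]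
      using tendsto_const_nhds.max ((hN (g * g)).sub (hN g))
  refine hlim.congr_dist (squeeze_zero (fun _ => dist_nonneg) (fun i => ?_)
    (by simpa only [zero_mul] using hlam.mul_const (2 * (δ + ε))))
  rw [dist_comm, Real.dist_eq, ← mul_sub, abs_mul, abs_of_nonneg (hlam₀ i)]
  exact mul_le_mul_of_nonneg_left
    (abs_translationLength_sub_displacement_le (hX i) (hmid i) (ρ i) (x i) g) (hlam₀ i)

/-- Otherwise `N` is ultrametric and attains its maximum at some `g₀`. Moving each base point to
the middle of its displacement by `g₀` then makes the rescaled displacements tend to zero. -/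
lemma exists_lt_mul_self_of_tendsto_displacement [l.NeBot]
    (hX : ∀ i, FourPointCondition (X i) δ) (hmid : ∀ i, HasRoughMidpoints (X i) ε)
    (hlam₀ : ∀ i, 0 ≤ lam i) (hlam : Tendsto lam l (nhds 0))
    (hN : ∀ g, Tendsto (fun i => lam i * displacement (ρ i) (x i) g) l (nhds (N g)))
    (hS : Subgroup.closure (S : Set G) = ⊤)
    (hmin : ∀ i y, 1 ≤ lam i * ∑ s ∈ S, displacement (ρ i) y s) :
    ∃ g, N g < N (g * g) := by
  by_contra! hell
  have hN₀ := isHyperbolicLength_of_tendsto_displacement hX hlam₀ hlam hN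
  obtain ⟨g₀, hg₀⟩ := exists_forall_le_of_mul_le_max hS hN₀.inv (hN₀.mul_le_max hell)
  choose m hm using fun i => hmid i (x i) (ρ i g₀ (x i))
  let p (i : ι) (g : G) : ℝ := lam i * displacement (ρ i) (x i) g
  have hbound (i : ι) : 1 ≤ ∑ s ∈ S, (max (max (p i s) (p i (s * g₀)))
      (max (p i (g₀⁻¹ * s)) (p i (g₀⁻¹ * (s * g₀)))) - p i g₀ + lam i * (2 * (δ + ε))) := by
    refine (hmin i (m i)).trans ?_
    rw [Finset.mul_sum]
    refine Finset.sum_le_sum fun s _ => ?_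
    simp only [p, ← mul_max_of_nonneg _ _ (hlam₀ i), ← mul_sub, ← mul_add]
    exact mul_le_mul_of_nonneg_left ((hm i).displacement_le (hX i) s) (hlam₀ i)
  have hlim := ge_of_tendsto' (tendsto_finsetSum S fun s _ =>
    ((((hN s).max (hN (s * g₀))).max ((hN (g₀⁻¹ * s)).max (hN (g₀⁻¹ * (s * g₀))))).sub
      (hN g₀)).add (hlam.mul_const (2 * (δ + ε)))) hbound
  refine hlim.not_gt (lt_of_le_of_lt (Finset.sum_nonpos fun s _ => ?_) zero_lt_one)
  rw [zero_mul, add_zero, sub_nonpos]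
  exact max_le (max_le (hg₀ _) (hg₀ _)) (max_le (hg₀ _) (hg₀ _))

lemma exists_isRTreeLengthFunction_tendsto [l.NeBot]
    (hX : ∀ i, FourPointCondition (X i) δ) (hmid : ∀ i, HasRoughMidpoints (X i) ε)
    (hlam₀ : ∀ i, 0 ≤ lam i) (hlam : Tendsto lam l (nhds 0))
    (hN : ∀ g, Tendsto (fun i => lam i * displacement (ρ i) (x i) g) l (nhds (N g)))
    (hS : Subgroup.closure (S : Set G) = ⊤)
    (hmin : ∀ i y, 1 ≤ lam i * ∑ s ∈ S, displacement (ρ i) y s) :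
    ∃ L : G → ℝ, IsRTreeLengthFunction L ∧
      ∀ g, Tendsto (fun i => lam i * translationLength (ρ i g)) l (nhds (L g)) := by
  obtain ⟨g, hg⟩ := exists_lt_mul_self_of_tendsto_displacement hX hmid hlam₀ hlam hN hS hmin
  exact ⟨_, (isHyperbolicLength_of_tendsto_displacement hX hlam₀ hlam hN).isRTreeLengthFunction hg,
    tendsto_mul_translationLength hX hmid hlam₀ hlam hN⟩

end RescaledLimit

section MinDisplacement

variable {G X : Type*} [Group G]

/-- The minimal joint displacement of a finite set of group elements. -/
noncomputable def minDisplacement [PseudoMetricSpace X] (S : Finset G) (ρ : G →* (X ≃ᵢ X)) : ℝ :=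
  ⨅ x, ∑ s ∈ S, displacement ρ x s

section PseudoMetric

variable [PseudoMetricSpace X] (S : Finset G) (ρ : G →* (X ≃ᵢ X))

lemma sum_displacement_nonneg (x : X) : 0 ≤ ∑ s ∈ S, displacement ρ x s :=
  Finset.sum_nonneg fun s _ => apply_nonneg (displacement ρ x) s

lemma minDisplacement_le (x : X) : minDisplacement S ρ ≤ ∑ s ∈ S, displacement ρ x s :=
  ciInf_le ⟨0, forall_mem_range.2 (sum_displacement_nonneg S ρ)⟩ x

variable {S ρ} in
lemma exists_sum_displacement_lt (h : 0 < minDisplacement S ρ) :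
    ∃ x, ∑ s ∈ S, displacement ρ x s < 2 * minDisplacement S ρ := by
  have : Nonempty X := by
    by_contra! hempty
    exact h.ne' (Real.iInf_of_isEmpty _)
  exact exists_lt_of_ciInf_lt (lt_mul_of_one_lt_left h one_lt_two)

end PseudoMetric

lemma translationLength_le_mul_minDisplacement [MetricSpace X] {S : Finset G}
    {ρ : G →* (X ≃ᵢ X)} {g : G} {C : ℝ} (hC₀ : 0 ≤ C)
    (hC : ∀ x, displacement ρ x g ≤ C * ∑ s ∈ S, displacement ρ x s) :
    translationLength (ρ g) ≤ C * minDisplacement S ρ := by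
  rw [minDisplacement, Real.mul_iInf_of_nonneg hC₀]
  exact ciInf_mono (bddBelow_range_dist_apply (ρ g)) hC

lemma exists_forall_groupSeminorm_le_mul_sum {S : Finset G}
    (hS : Subgroup.closure (S : Set G) = ⊤) (g : G) :
    ∃ C ≥ 0, ∀ p : GroupSeminorm G, p g ≤ C * ∑ s ∈ S, p s := by
  have hg : g ∈ Subgroup.closure (S : Set G) := hS ▸ Subgroup.mem_top g
  induction hg using Subgroup.closure_induction with
  | mem s hs =>
    refine ⟨1, zero_le_one, fun p => ?_⟩
    rw [one_mul]
    exact Finset.single_le_sum (fun t _ => apply_nonneg p t) hs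
  | one => exact ⟨0, le_rfl, fun p => by rw [map_one_eq_zero, zero_mul]⟩
  | mul g h _ _ hg hh =>
    obtain ⟨A, hA, hgA⟩ := hg
    obtain ⟨B, hB, hhB⟩ := hh
    refine ⟨A + B, add_nonneg hA hB, fun p => (map_mul_le_add p g h).trans ?_⟩
    rw [add_mul]
    exact add_le_add (hgA p) (hhB p)
  | inv g _ hg =>
    obtain ⟨A, hA, hgA⟩ := hg
    exact ⟨A, hA, fun p => by rw [map_inv_eq_map]; exact hgA p⟩

end MinDisplacement

section Compactness

lemma countable_of_fg {G : Type*} [Group G] (hfg : Group.FG G) : Countable G := by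
  obtain ⟨α, _, f, hf⟩ := Group.fg_iff_exists_freeGroup_hom_surjective_finite.1 hfg
  have hmk : Function.Surjective (FreeGroup.mk : List (α × Bool) → FreeGroup α) :=
    Quot.mk_surjective
  exact (hf.comp hmk).countable

lemma exists_subseq_tendsto_pointwise {α : Type*} [Countable α] {f : ℕ → α → ℝ} {C : α → ℝ}
    (hf : ∀ n a, |f n a| ≤ C a) :
    ∃ φ : ℕ → ℕ, StrictMono φ ∧ ∃ L : α → ℝ, ∀ a,
      Tendsto (fun i => f (φ i) a) atTop (nhds (L a)) := by
  have hK : IsCompact (univ.pi fun a => Icc (-C a) (C a)) :=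
    isCompact_univ_pi fun _ => isCompact_Icc
  obtain ⟨L, -, φ, hφ, hL⟩ := hK.isSeqCompact fun n => mem_univ_pi.2 fun a => abs_le.1 (hf n a)
  exact ⟨φ, hφ, L, tendsto_pi_nhds.1 hL⟩

universe u v

variable {G : Type u} [Group G] {S : Finset G} {X : ℕ → Type v} [∀ n, MetricSpace (X n)]

lemma exists_subseq_tendsto_translationLength [Countable G]
    (hS : Subgroup.closure (S : Set G) = ⊤) {ρ : ∀ n, G →* (X n ≃ᵢ X n)}
    (hD : ¬Tendsto (fun n => minDisplacement S (ρ n)) atTop atTop) :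
    ∃ φ : ℕ → ℕ, StrictMono φ ∧ ∃ L : G → ℝ, ∀ g,
      Tendsto (fun i => translationLength (ρ (φ i) g)) atTop (nhds (L g)) := by
  choose C hC₀ hC using exists_forall_groupSeminorm_le_mul_sum hS
  simp only [Filter.tendsto_atTop, not_forall, not_eventually, not_le] at hD
  obtain ⟨B, hB⟩ := hD
  obtain ⟨φ, hφ, hφB⟩ := extraction_of_frequently_atTop hB
  have hbound (i : ℕ) (g : G) : |translationLength (ρ (φ i) g)| ≤ C g * B := by
    rw [abs_of_nonneg (translationLength_nonneg _)]
    exact (translationLength_le_mul_minDisplacement (hC₀ g) fun _ => hC g _).trans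
      (mul_le_mul_of_nonneg_left (hφB i).le (hC₀ g))
  obtain ⟨ψ, hψ, hL⟩ := exists_subseq_tendsto_pointwise hbound
  exact ⟨φ ∘ ψ, hφ.comp hψ, hL⟩

lemma exists_subseq_tendsto_isRTreeLengthFunction [Countable G]
    (hS : Subgroup.closure (S : Set G) = ⊤) {δ ε : ℝ} (hX : ∀ n, FourPointCondition (X n) δ)
    (hmid : ∀ n, HasRoughMidpoints (X n) ε) {ρ : ∀ n, G →* (X n ≃ᵢ X n)}
    (hD : Tendsto (fun n => minDisplacement S (ρ n)) atTop atTop) :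
    ∃ φ : ℕ → ℕ, StrictMono φ ∧ ∃ lam : ℕ → ℝ, Tendsto lam atTop (nhds 0) ∧
      ∃ L : G → ℝ, IsRTreeLengthFunction L ∧
        ∀ g, Tendsto (fun i => lam i * translationLength (ρ (φ i) g)) atTop (nhds (L g)) := by
  choose C hC₀ hC using exists_forall_groupSeminorm_le_mul_sum hS
  obtain ⟨φ, hφ, hpos⟩ := extraction_of_eventually_atTop (hD.eventually_gt_atTop 0)
  choose x hx using fun i => exists_sum_displacement_lt (hpos i)
  have hbound (i : ℕ) (g : G) : |(minDisplacement S (ρ (φ i)))⁻¹ *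
      displacement (ρ (φ i)) (x i) g| ≤ 2 * C g := by
    rw [abs_of_nonneg (mul_nonneg (inv_pos.2 (hpos i)).le (apply_nonneg _ g)),
      inv_mul_le_iff₀ (hpos i)]
    calc displacement (ρ (φ i)) (x i) g
        ≤ C g * ∑ s ∈ S, displacement (ρ (φ i)) (x i) s := hC g _
      _ ≤ C g * (2 * minDisplacement S (ρ (φ i))) :=
          mul_le_mul_of_nonneg_left (hx i).le (hC₀ g)
      _ = minDisplacement S (ρ (φ i)) * (2 * C g) := by ring
  obtain ⟨ψ, hψ, N, hN⟩ := exists_subseq_tendsto_pointwise hbound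
  have hlam := (hD.comp (hφ.comp hψ).tendsto_atTop).inv_tendsto_atTop
  refine ⟨φ ∘ ψ, hφ.comp hψ, _, hlam, exists_isRTreeLengthFunction_tendsto (fun _ => hX _)
    (fun _ => hmid _) (fun i => (inv_pos.2 (hpos (ψ i))).le) hlam hN hS fun i y => ?_⟩
  exact (le_inv_mul_iff₀ (hpos (ψ i))).2 ((mul_one _).trans_le (minDisplacement_le S _ y))

theorem length_functions_compactification_general (hfg : Group.FG G) {δ ε : ℝ}
    (hX : ∀ n, FourPointCondition (X n) δ) (hmid : ∀ n, HasRoughMidpoints (X n) ε)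
    (ρ : ∀ n, G →* (X n ≃ᵢ X n)) :
    ∃ φ : ℕ → ℕ, StrictMono φ ∧
      ((∃ L : G → ℝ, ∀ g, Tendsto (fun i => translationLength (ρ (φ i) g)) atTop (nhds (L g))) ∨
        ∃ lam : ℕ → ℝ, Tendsto lam atTop (nhds 0) ∧
          ∃ (Γ : Type u) (_ : MetricSpace Γ), IsRTree Γ ∧ ∃ σ : G →* (Γ ≃ᵢ Γ),
            (¬∃ z, ∀ g, σ g z = z) ∧ (∃ g, translationLength (σ g) ≠ 0) ∧
              ∀ g, Tendsto (fun i => lam i * translationLength (ρ (φ i) g)) atTop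
                (nhds (translationLength (σ g)))) := by
  obtain ⟨S, hS⟩ := Group.fg_def.1 hfg
  have := countable_of_fg hfg
  by_cases hD : Tendsto (fun n => minDisplacement S (ρ n)) atTop atTop
  · obtain ⟨φ, hφ, lam, hlam, L, ⟨Γ, _, hΓ, σ, hfix, hne, hσ⟩, hL⟩ :=
      exists_subseq_tendsto_isRTreeLengthFunction hS hX hmid hD
    exact ⟨φ, hφ, Or.inr ⟨lam, hlam, Γ, _, hΓ, σ, hfix, hne, fun g => hσ g ▸ hL g⟩⟩
  · obtain ⟨φ, hφ, hL⟩ := exists_subseq_tendsto_translationLength hS hD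
    exact ⟨φ, hφ, Or.inl hL⟩

end Compactness

/-- Sequential compactness of the space of length functions of all
actions of a finitely generated group on geodesic spaces with `Δ`-thin triangles, in
`LF(G) ∪ PLF(G)`: every sequence of such length functions has a subsequence which either
converges pointwise in `LF(G)`, or, after rescaling by some `λ_n → 0`, converges
pointwise to a nonzero length function which is the length function of an isometric
action of `G` on an `ℝ`-tree with no global fixed point. -/
theorem length_functions_compactification {G : Type u} [Group G] (hfg : Group.FG G)
    {Δ : ℝ} (hΔ : 0 < Δ)
    (X : ℕ → Type v) [∀ n, MetricSpace (X n)]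
    (hgeo : ∀ n, GeodesicSpace (X n)) (hthin : ∀ n, ThinTriangles (X n) Δ)
    (ρ : ∀ n, G →* (X n ≃ᵢ X n)) :
    ∃ φ : ℕ → ℕ, StrictMono φ ∧
      ((∃ L : G → ℝ, ∀ g : G,
          Filter.Tendsto (fun i => translationLength (ρ (φ i) g)) Filter.atTop
            (nhds (L g))) ∨
       (∃ lam : ℕ → ℝ, Filter.Tendsto lam Filter.atTop (nhds 0) ∧
          ∃ (Γ : Type u) (_ : MetricSpace Γ), IsRTree Γ ∧
            ∃ σ : G →* (Γ ≃ᵢ Γ),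
              (¬ ∃ z : Γ, ∀ g : G, σ g z = z) ∧
              (∃ g : G, translationLength (σ g) ≠ 0) ∧
              ∀ g : G,
                Filter.Tendsto (fun i => lam i * translationLength (ρ (φ i) g))
                  Filter.atTop (nhds (translationLength (σ g))))) := by
  exact length_functions_compactification_general hfg
    (fun n => (hthin n).fourPointCondition (hgeo n)) (fun n => (hgeo n).hasRoughMidpoints) ρ
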